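/- arXiv:2406.01828 — 2 statements merged into one kernel-verified Lean document; each statement's English description precedes it below -/
import Mathlib

section
/- Assume the Riemann Hypothesis. Then for every complex number s with Re s > 1/2 and s ≠ 1, one has the strict inequality −Re(ζ'(s)/ζ(s)) < Re(1/(s−1)) − (1/2)·log π + (1/2)·Re(Γ'(s/2+1)/Γ(s/2+1)), where Γ is the complex Gamma function and Γ' its derivative. -/
open Complex Real

/-!
`Re ξ'/ξ > 0` says that `|ξ|` increases strictly along horizontal lines. For `0 < h < 1` the
quotient `ξ(s - h) / ξ(s)` has modulus `1` on the line `Re s = (1 + h) / 2`, because there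
`s - h` is the reflection `1 - conj s`. Under RH it is holomorphic to the right of that line; it is
bounded on the real axis and, by the Borel–Carathéodory bound for `log ((s - 1) ζ(s))`, of
exponential type, so Phragmén–Lindelöf gives `|ξ(s - h)| ≤ |ξ(s)|`. Letting `h → 0` yields
`Re ξ'/ξ ≥ 0`, the open mapping theorem makes this strict, and expanding `ξ'/ξ` over the factors
of `ξ` gives the bound.
-/

section ComplexAnalysis

open Set Filter Topology Metric ComplexConjugate

variable {U : Set ℂ} {f : ℂ → ℂ}

lemma exists_eqOn_mul_exp_of_hasDerivAt_logDeriv {k : ℂ → ℂ} (hU : IsOpen U)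
    (hUc : IsPreconnected U) (hf : DifferentiableOn ℂ f U) (hf0 : ∀ z ∈ U, f z ≠ 0)
    (hk : ∀ z ∈ U, HasDerivAt k (logDeriv f z) z) :
    ∃ a : ℂ, ∀ z ∈ U, f z = a * cexp (k z) := by
  have hexp (z : ℂ) (hz : z ∈ U) : HasDerivAt (fun w ↦ cexp (k w)) _ z := (hk z hz).cexp
  have hlog : EqOn (logDeriv f) (logDeriv fun z ↦ cexp (k z)) U := fun z hz ↦ by
    rw [logDeriv_apply (fun z ↦ cexp (k z)), (hexp z hz).deriv,
      mul_div_cancel_left₀ _ (Complex.exp_ne_zero _)]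
  obtain ⟨a, -, ha⟩ := (logDeriv_eqOn_iff hf
    (fun z hz ↦ (hexp z hz).differentiableAt.differentiableWithinAt) hU hUc
    (fun _ _ ↦ Complex.exp_ne_zero _) hf0).1 hlog
  exact ⟨a, ha⟩

lemma norm_mul_exp_neg_le_norm_of_ne_zero_on_ball {c z : ℂ} {R M : ℝ} (hM : 0 < M)
    (hf : DifferentiableOn ℂ f (ball c R)) (hf0 : ∀ w ∈ ball c R, f w ≠ 0)
    (hfM : ∀ w ∈ ball c R, ‖f w‖ ≤ ‖f c‖ * rexp M) (hz : z ∈ ball c R) :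
    ‖f c‖ * rexp (-(2 * M * ‖z - c‖ / (R - ‖z - c‖))) ≤ ‖f z‖ := by
  have hR : 0 < R := pos_of_mem_ball hz
  have hc : c ∈ ball c R := mem_ball_self hR
  have hdlog : DifferentiableOn ℂ (logDeriv f) (ball c R) := (hf.deriv isOpen_ball).div hf hf0
  obtain ⟨k, hkc, hk⟩ := hdlog.isExactOn_ball.with_val_at c 0
  obtain ⟨a, ha⟩ := exists_eqOn_mul_exp_of_hasDerivAt_logDeriv isOpen_ball
    (convex_ball c R).isPreconnected hf hf0 hk
  obtain rfl : f c = a := by simpa [hkc] using ha c hc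
  have hnorm (w : ℂ) (hw : w ∈ ball c R) : ‖f w‖ = ‖f c‖ * rexp (k w).re := by
    rw [ha w hw, norm_mul, Complex.norm_exp]
  have hfc : 0 < ‖f c‖ := norm_pos_iff.2 (hf0 c hc)
  have hshift : MapsTo (c + ·) (ball 0 R) (ball c R) := fun w hw ↦ by simpa using hw
  have hkz : ‖k z‖ ≤ 2 * M * ‖z - c‖ / (R - ‖z - c‖) := by
    have hkd : DifferentiableOn ℂ (fun w ↦ k (c + w)) (ball 0 R) := fun w hw ↦
      ((hk _ (hshift hw)).differentiableAt.comp w (by fun_prop)).differentiableWithinAt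
    have hkM : MapsTo (fun w ↦ k (c + w)) (ball 0 R) {w | w.re ≤ M} := fun w hw ↦ by
      have h := hfM _ (hshift hw)
      rwa [hnorm _ (hshift hw), mul_le_mul_iff_right₀ hfc, Real.exp_le_exp] at h
    simpa using borelCaratheodory_zero hM hkd hkM hR
      (z := z - c) (by simpa [dist_eq_norm] using hz) (by simpa using hkc)
  rw [hnorm z hz]
  gcongr
  linarith [neg_abs_le (k z).re, abs_re_le_norm (k z)]

lemma norm_le_of_bounded_on_vertical_line {c A B C M : ℝ} {s : ℂ}
    (hf : DifferentiableOn ℂ f {z | c ≤ z.re})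
    (hexp : ∀ z : ℂ, c ≤ z.re → ‖f z‖ ≤ A * rexp (B * ‖z‖))
    (hreal : ∀ᶠ x : ℝ in atTop, ‖f x‖ ≤ M) (hline : ∀ z : ℂ, z.re = c → ‖f z‖ ≤ C)
    (hs : c ≤ s.re) : ‖f s‖ ≤ C := by
  have hshift (w : ℂ) (hw : 0 ≤ w.re) : c ≤ (w + c).re := by simpa using hw
  rw [← sub_add_cancel s (c : ℂ)]
  refine PhragmenLindelof.right_half_plane_of_bounded_on_real (f := fun w ↦ f (w + c))
    ?_ ⟨1, one_lt_two, |B|, ?_⟩ ?_ (fun y ↦ hline _ (by simp)) (by simpa using hs)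
  · refine DifferentiableOn.diffContOnCl ?_
    rw [closure_setOfPred_lt_re]
    exact hf.comp (by fun_prop) hshift
  · refine .of_bound (A * rexp (|B| * |c|)) (eventually_inf_principal.2 (.of_forall ?_))
    intro w (hw : 0 < w.re)
    have hbound := hexp (w + c) (hshift w hw.le)
    have hA : 0 ≤ A :=
      nonneg_of_mul_nonneg_left ((norm_nonneg _).trans hbound) (Real.exp_pos _)
    have hnorm : ‖w + c‖ ≤ |c| + ‖w‖ := by simpa [add_comm] using norm_add_le w c
    calc ‖f (w + c)‖ ≤ A * rexp (B * ‖w + c‖) := hbound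
      _ ≤ A * rexp (|B| * (|c| + ‖w‖)) := by gcongr; exact le_abs_self B
      _ = A * rexp (|B| * |c|) * ‖rexp (|B| * ‖w‖ ^ (1 : ℝ))‖ := by
        rw [mul_add, Real.exp_add, Real.rpow_one, Real.norm_of_nonneg (Real.exp_nonneg _),
          mul_assoc]
  · refine isBoundedUnder_of_eventually_le (a := M) ?_
    filter_upwards [(tendsto_atTop_add_const_right _ c tendsto_id).eventually hreal] with x hx
    simpa using hx

lemma eqOn_const_or_forall_re_pos (hU : IsOpen U) (hUc : IsPreconnected U)
    (hf : DifferentiableOn ℂ f U) (hre : ∀ z ∈ U, 0 ≤ (f z).re) :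
    (∃ c, ∀ z ∈ U, f z = c) ∨ ∀ z ∈ U, 0 < (f z).re := by
  refine (hf.analyticOnNhd hU).is_constant_or_isOpen hUc |>.imp_right fun hopen z hz ↦ ?_
  have himage : re '' (f '' U) ⊆ interior (Ici 0) :=
    interior_maximal (by rintro - ⟨-, ⟨w, hw, rfl⟩, rfl⟩; exact hre w hw)
      (isOpenMap_re _ (hopen U Subset.rfl hU))
  rw [interior_Ici] at himage
  exact himage (mem_image_of_mem _ (mem_image_of_mem _ hz))

lemma norm_eq_norm_mul_exp_of_logDeriv_eq_const {c z w : ℂ} (hU : IsOpen U)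
    (hUc : IsPreconnected U) (hf : DifferentiableOn ℂ f U) (hf0 : ∀ z ∈ U, f z ≠ 0)
    (hlog : ∀ z ∈ U, logDeriv f z = c) (hz : z ∈ U) (hw : w ∈ U) :
    ‖f z‖ = ‖f w‖ * rexp (c * (z - w)).re := by
  obtain ⟨a, ha⟩ := exists_eqOn_mul_exp_of_hasDerivAt_logDeriv hU hUc hf hf0
    (k := fun z ↦ c * z) fun z hz ↦ by simpa [hlog z hz] using (hasDerivAt_id z).const_mul c
  rw [ha z hz, ha w hw, norm_mul, norm_mul, Complex.norm_exp, Complex.norm_exp, mul_assoc,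
    ← Real.exp_add, mul_sub, sub_re, add_sub_cancel]

lemma re_logDeriv_pos_of_nonneg {z w : ℂ} (hU : IsOpen U) (hUc : IsPreconnected U)
    (hf : DifferentiableOn ℂ f U) (hf0 : ∀ z ∈ U, f z ≠ 0)
    (hre : ∀ z ∈ U, 0 ≤ (logDeriv f z).re) (hz : z ∈ U) (hw : w ∈ U) (him : z.im = w.im)
    (hzw : ‖f z‖ ≠ ‖f w‖) : ∀ s ∈ U, 0 < (logDeriv f s).re := by
  have hlog : DifferentiableOn ℂ (logDeriv f) U := (hf.deriv hU).div hf hf0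
  obtain ⟨c, hc⟩ | hpos := eqOn_const_or_forall_re_pos hU hUc hlog hre
  · have hc0 : c.re ≠ 0 := fun h ↦ hzw <| by
      rw [norm_eq_norm_mul_exp_of_logDeriv_eq_const hU hUc hf hf0 hc hz hw]
      simp [h, him]
    intro s hs
    exact (hre s hs).lt_of_ne' (by rwa [hc s hs])
  · exact hpos

lemma re_logDeriv_nonneg_of_eventually_norm_sub_le {s : ℂ} (hf : DifferentiableAt ℂ f s)
    (hmono : ∀ᶠ h : ℝ in 𝓝[>] 0, ‖f (s - h)‖ ≤ ‖f s‖) : 0 ≤ (logDeriv f s).re := by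
  have hderiv : HasDerivAt (fun h : ℝ ↦ f (s - h)) (-deriv f s) 0 := by
    have hs : HasDerivAt f (deriv f s) (s - ((0 : ℝ) : ℂ)) := by simpa using hf.hasDerivAt
    exact (hs.comp_const_sub s _).comp_ofReal
  have hslope := (hasDerivAt_iff_tendsto_slope.1 hderiv.norm_sq).mono_left (nhdsGT_le_nhdsNE 0)
  have hinner : 2 * inner ℝ (f s) (-deriv f s) ≤ 0 := by
    refine le_of_tendsto (by simpa using hslope) ?_
    filter_upwards [hmono, self_mem_nhdsWithin] with h hh (hpos : 0 < h)
    rw [slope_def_field]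
    refine div_nonpos_of_nonpos_of_nonneg (sub_nonpos.2 ?_) (by linarith)
    simpa using pow_le_pow_left₀ (norm_nonneg _) hh 2
  have hre : 0 ≤ (deriv f s * conj (f s)).re := by
    rw [Complex.inner, neg_mul, neg_re] at hinner
    linarith
  rw [logDeriv_apply, div_eq_mul_inv, Complex.inv_def, ← mul_assoc, re_mul_ofReal]
  exact mul_nonneg hre (inv_nonneg.2 (normSq_nonneg _))

end ComplexAnalysis

section GammaQuotient

open MeasureTheory

lemma norm_betaIntegral_le {z : ℂ} {h : ℝ} (hz : 1 ≤ z.re) (hh : 0 < h) :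
    ‖betaIntegral z h‖ ≤ 1 / h := by
  have hint : IntervalIntegrable (fun x : ℝ ↦ (1 - x) ^ (h - 1)) volume 0 1 := by
    have := (intervalIntegral.intervalIntegrable_rpow' (a := 1) (b := 0) (r := h - 1)
      (by linarith)).comp_sub_left 1
    simpa using this
  have hbound : ∀ᵐ x : ℝ, x ∈ Set.Ioc 0 1 →
      ‖(x : ℂ) ^ (z - 1) * (1 - (x : ℂ)) ^ ((h : ℂ) - 1)‖ ≤ (1 - x) ^ (h - 1) := by
    filter_upwards [Measure.ae_ne volume (1 : ℝ)] with x hx1 ⟨hx0, hx⟩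
    have hx1' : 0 < 1 - x := sub_pos.2 (lt_of_le_of_ne hx hx1)
    rw [norm_mul, ← ofReal_one, ← ofReal_sub, ← ofReal_sub, norm_cpow_eq_rpow_re_of_pos hx0,
      norm_cpow_eq_rpow_re_of_pos hx1', ofReal_re, sub_re, ofReal_re]
    exact mul_le_of_le_one_left (by positivity)
      (Real.rpow_le_one hx0.le hx (by linarith))
  calc ‖betaIntegral z h‖ ≤ ∫ x in (0 : ℝ)..1, (1 - x) ^ (h - 1) :=
        intervalIntegral.norm_integral_le_of_norm_le zero_le_one hbound hint
    _ = 1 / h := by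
        rw [intervalIntegral.integral_comp_sub_left (fun x ↦ x ^ (h - 1)) 1, sub_self, sub_zero,
          integral_rpow (Or.inl (by linarith))]
        simp [Real.zero_rpow hh.ne']

lemma norm_Gamma_div_Gamma_add_le {z : ℂ} {h : ℝ} (hz : 1 ≤ z.re) (hh : 0 < h) :
    ‖Complex.Gamma z / Complex.Gamma (z + h)‖ ≤ 1 / Real.Gamma (h + 1) := by
  have hΓh : 0 < Real.Gamma h := Real.Gamma_pos_of_pos hh
  have hΓ : Complex.Gamma (z + h) ≠ 0 :=
    Complex.Gamma_ne_zero_of_re_pos (by rw [add_re, ofReal_re]; linarith)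
  have hbeta : Complex.Gamma z / Complex.Gamma (z + h) = betaIntegral z h / (Real.Gamma h : ℂ) := by
    rw [div_eq_div_iff hΓ (ofReal_ne_zero.2 hΓh.ne'), ← Complex.Gamma_ofReal,
      Gamma_mul_Gamma_eq_betaIntegral (by linarith) (by simpa using hh), mul_comm]
  rw [hbeta, norm_div, Complex.norm_of_nonneg hΓh.le, Real.Gamma_add_one hh.ne', ← div_div]
  gcongr
  exact norm_betaIntegral_le hz hh

end GammaQuotient

section ZetaBounds

open Set Filter Topology MeasureTheory Asymptotics

/-- The integral `∫₁^∞ {t} t ^ (-s - 1) dt`, the continuation of `1 / (s - 1) - ζ(s) / s`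
to `Re s > 0`. -/
noncomputable def fractMellin (s : ℂ) : ℂ :=
  ∫ t in Ioi (1 : ℝ), ((Int.fract t : ℝ) : ℂ) * (t : ℂ) ^ (-(s + 1))

lemma norm_ofReal_fract_le_one (t : ℝ) : ‖((Int.fract t : ℝ) : ℂ)‖ ≤ 1 := by
  rw [norm_real, norm_eq_abs, Int.abs_fract]
  exact (Int.fract_lt_one t).le

lemma measurable_ofReal_fract : Measurable fun t : ℝ ↦ ((Int.fract t : ℝ) : ℂ) :=
  measurable_ofReal.comp measurable_fract

lemma integrableOn_fract_mul_cpow {s : ℂ} (hs : 0 < s.re) :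
    IntegrableOn (fun t : ℝ ↦ ((Int.fract t : ℝ) : ℂ) * (t : ℂ) ^ (-(s + 1))) (Ioi 1) :=
  (integrableOn_Ioi_cpow_of_lt (by simpa) one_pos).bdd_mul
    measurable_ofReal_fract.aestronglyMeasurable (.of_forall norm_ofReal_fract_le_one)

lemma norm_fractMellin_le {s : ℂ} (hs : 0 < s.re) : ‖fractMellin s‖ ≤ 1 / s.re := by
  have hbound : ∀ᵐ t : ℝ ∂volume.restrict (Ioi 1),
      ‖((Int.fract t : ℝ) : ℂ) * (t : ℂ) ^ (-(s + 1))‖ ≤ t ^ (-(s.re + 1)) := by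
    filter_upwards [ae_restrict_mem measurableSet_Ioi] with t ht
    have ht0 : 0 < t := one_pos.trans ht
    rw [norm_mul, norm_cpow_eq_rpow_re_of_pos ht0, neg_re, add_re, one_re]
    exact mul_le_of_le_one_left (by positivity) (norm_ofReal_fract_le_one t)
  calc ‖fractMellin s‖ ≤ ∫ t in Ioi (1 : ℝ), t ^ (-(s.re + 1)) :=
        norm_integral_le_of_norm_le (integrableOn_Ioi_rpow_of_lt (by linarith) one_pos) hbound
    _ = 1 / s.re := by rw [integral_Ioi_rpow_of_lt (by linarith) one_pos]; simp

lemma fractMellin_eq_mellin (s : ℂ) :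
    fractMellin s = mellin ((Ioi (1 : ℝ)).indicator fun t ↦ ((Int.fract t : ℝ) : ℂ)) (-s) := by
  rw [fractMellin, mellin, ← integral_indicator measurableSet_Ioi,
    ← integral_indicator measurableSet_Ioi]
  congr 1 with t
  by_cases ht : 1 < t
  · have ht0 : 0 < t := one_pos.trans ht
    simp [ht, ht0, mul_comm, ← neg_add']
  · simp [indicator, ht]

lemma differentiableAt_fractMellin {s : ℂ} (hs : 0 < s.re) :
    DifferentiableAt ℂ fractMellin s := by
  set g : ℝ → ℂ := (Ioi (1 : ℝ)).indicator fun t ↦ ((Int.fract t : ℝ) : ℂ) with hg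
  have hg1 (t : ℝ) : ‖g t‖ ≤ 1 :=
    (norm_indicator_le_norm_self _ _).trans (norm_ofReal_fract_le_one t)
  have hgm : Measurable g := measurable_ofReal_fract.indicator measurableSet_Ioi
  have hg0 : g =ᶠ[𝓝[>] 0] 0 := by
    filter_upwards [Ioo_mem_nhdsGT (one_pos : (0 : ℝ) < 1)] with t ht
    simp [hg, ht.2.le]
  have hmellin : DifferentiableAt ℂ (mellin g) (-s) := by
    refine mellin_differentiableAt_of_isBigO_rpow (a := 0) (b := -s.re - 1) ?_ ?_ (by simpa) ?_
      (by simp)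
    · exact ((locallyIntegrable_const (1 : ℝ)).mono hgm.aestronglyMeasurable
        (.of_forall fun t ↦ by simpa using hg1 t)).locallyIntegrableOn _
    · exact .of_bound 1 (.of_forall fun t ↦ by simpa using hg1 t)
    · exact hg0.trans_isBigO (isBigO_zero _ _)
  rw [funext fractMellin_eq_mellin]
  exact hmellin.comp s (by fun_prop)

lemma riemannZeta_eq_sub_mul_fractMellin {s : ℂ} (hs : 1 < s.re) :
    riemannZeta s = s / (s - 1) - s * fractMellin s := by
  have hs1 : s - 1 ≠ 0 := sub_ne_zero.2 (by rintro rfl; simp at hs)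
  have hsplit : EqOn (fun t : ℝ ↦ (t : ℂ) ^ (-s))
      (fun t : ℝ ↦ (t : ℂ) * (t : ℂ) ^ (-(s + 1))) (Ioi 1) := fun t ht ↦ by
    have ht0 : (t : ℂ) ≠ 0 := ofReal_ne_zero.2 (one_pos.trans ht).ne'
    change (t : ℂ) ^ (-s) = (t : ℂ) * (t : ℂ) ^ (-(s + 1))
    rw [show -s = 1 + -(s + 1) by ring, cpow_add _ _ ht0, cpow_one]
  have hint : IntegrableOn (fun t : ℝ ↦ (t : ℂ) * (t : ℂ) ^ (-(s + 1))) (Ioi 1) :=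
    (integrableOn_Ioi_cpow_of_lt (by simpa using hs) one_pos).congr_fun hsplit measurableSet_Ioi
  have hpole : ∫ t in Ioi (1 : ℝ), (t : ℂ) * (t : ℂ) ^ (-(s + 1)) = 1 / (s - 1) := by
    rw [← setIntegral_congr_fun measurableSet_Ioi hsplit,
      integral_Ioi_cpow_of_lt (by simpa using hs) one_pos, ofReal_one, one_cpow,
      neg_add_eq_sub, ← neg_sub s 1, neg_div_neg_eq]
  have hfloor : ∫ t in Ioi (1 : ℝ), (∑ k ∈ Finset.Icc 1 ⌊t⌋₊, (1 : ℕ → ℂ) k) *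
      (t : ℂ) ^ (-(s + 1)) = 1 / (s - 1) - fractMellin s := by
    rw [← hpole, fractMellin, ← integral_sub hint
      (integrableOn_fract_mul_cpow (by linarith))]
    refine setIntegral_congr_fun measurableSet_Ioi fun t ht ↦ ?_
    have ht0 : 0 ≤ t := (one_pos.trans ht).le
    simp [← sub_mul, Int.fract, ← natCast_floor_eq_intCast_floor ht0]
  have hO : (fun n : ℕ ↦ ∑ k ∈ Finset.Icc 1 n, ‖(1 : ℕ → ℂ) k‖) =O[atTop]
      fun n ↦ (n : ℝ) ^ (1 : ℝ) := by simpa using isBigO_refl _ _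
  rw [← LSeries_one_eq_riemannZeta hs, LSeries_eq_mul_integral' 1 zero_le_one hs hO, hfloor]
  ring

lemma riemannZeta₁_eq_sub_mul {s : ℂ} (hs : s ≠ 1) :
    riemannZeta₁ s = (s - 1) * riemannZeta s := by
  rw [riemannZeta_eq_inv_sub_mul hs, mul_inv_cancel_left₀ (sub_ne_zero.2 hs)]

lemma riemannZeta₁_eq_sub_mul_fractMellin {s : ℂ} (hs : 0 < s.re) :
    riemannZeta₁ s = s - s * (s - 1) * fractMellin s := by
  have hU : IsOpen {s : ℂ | 0 < s.re} := isOpen_lt continuous_const continuous_re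
  have hleft : AnalyticOnNhd ℂ riemannZeta₁ {s : ℂ | 0 < s.re} :=
    differentiable_riemannZeta₁.differentiableOn.analyticOnNhd hU
  have hright : AnalyticOnNhd ℂ (fun s ↦ s - s * (s - 1) * fractMellin s) {s : ℂ | 0 < s.re} :=
    DifferentiableOn.analyticOnNhd (fun z hz ↦ by
      have := differentiableAt_fractMellin hz
      exact DifferentiableAt.differentiableWithinAt (by fun_prop)) hU
  refine hleft.eqOn_of_preconnected_of_eventuallyEq hright
    (convex_halfSpace_re_gt 0).isPreconnected (z₀ := 2) (by simp) ?_ hs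
  filter_upwards [(isOpen_lt continuous_const continuous_re).mem_nhds
    (show (1 : ℝ) < (2 : ℂ).re by simp)] with z (hz : 1 < z.re)
  have hz1 : z ≠ 1 := by rintro rfl; simp at hz
  have hz1' : z - 1 ≠ 0 := sub_ne_zero.2 hz1
  rw [riemannZeta₁_eq_sub_mul hz1, riemannZeta_eq_sub_mul_fractMellin hz]
  field_simp

lemma norm_riemannZeta₁_le {s : ℂ} (hs : 0 < s.re) :
    ‖riemannZeta₁ s‖ ≤ (1 / s.re + 1) * (‖s‖ + 1) ^ 2 := by
  have hs1 : ‖s - 1‖ ≤ ‖s‖ + 1 := by simpa using norm_sub_le s 1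
  calc ‖riemannZeta₁ s‖ ≤ ‖s‖ + ‖s‖ * ‖s - 1‖ * ‖fractMellin s‖ := by
        simpa [riemannZeta₁_eq_sub_mul_fractMellin hs] using
          norm_sub_le s (s * (s - 1) * fractMellin s)
    _ ≤ ‖s‖ + ‖s‖ * (‖s‖ + 1) * (1 / s.re) := by gcongr; exact norm_fractMellin_le hs
    _ ≤ (1 / s.re + 1) * (‖s‖ + 1) ^ 2 := by
        have : 0 < 1 / s.re := by positivity
        nlinarith [norm_nonneg s]

lemma norm_riemannZeta₁_le_exp {s : ℂ} (hs : 0 < s.re) :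
    ‖riemannZeta₁ s‖ ≤ rexp (1 / s.re + 2 * ‖s‖) := by
  calc ‖riemannZeta₁ s‖ ≤ (1 / s.re + 1) * (‖s‖ + 1) ^ 2 := norm_riemannZeta₁_le hs
    _ ≤ rexp (1 / s.re) * rexp ‖s‖ ^ 2 := by gcongr <;> exact Real.add_one_le_exp _
    _ = rexp (1 / s.re + 2 * ‖s‖) := by rw [← Real.exp_nat_mul, ← Real.exp_add]; norm_cast

lemma norm_riemannZeta_sub_one_le {s : ℂ} (hs : 2 ≤ s.re) :
    ‖riemannZeta s - 1‖ ≤ π ^ 2 / 6 - 1 := by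
  have hs1 : 1 < s.re := by linarith
  have hs0 : s ≠ 0 := by rintro rfl; norm_num at hs
  have hzeta := (hasSum_nat_add_iff' 2).2 (Complex.summable_one_div_nat_cpow.2 hs1).hasSum
  have htwo := (hasSum_nat_add_iff' 2).2 hasSum_zeta_two
  rw [← zeta_eq_tsum_one_div_nat_cpow hs1] at hzeta
  simp only [Finset.sum_range_succ, Finset.sum_range_zero, Nat.cast_zero, Nat.cast_one,
    zero_cpow hs0, one_cpow, div_zero, div_one, zero_add, ne_eq, OfNat.ofNat_ne_zero,
    not_false_eq_true, zero_pow, one_pow] at hzeta htwo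
  refine hzeta.norm_le_of_bounded htwo fun n ↦ ?_
  have hn : (1 : ℝ) ≤ (n + 2 : ℕ) := by norm_cast; lia
  rw [norm_div, norm_one, norm_natCast_cpow_of_pos (by lia), ← Real.rpow_two]
  gcongr

lemma norm_riemannZeta_le {s : ℂ} (hs : 2 ≤ s.re) : ‖riemannZeta s‖ ≤ 5 / 3 := by
  have htri : ‖riemannZeta s‖ ≤ 1 + ‖riemannZeta s - 1‖ := by
    simpa using norm_add_le 1 (riemannZeta s - 1)
  nlinarith [norm_riemannZeta_sub_one_le hs, Real.pi_lt_d2, Real.pi_pos]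

lemma one_third_le_norm_riemannZeta {s : ℂ} (hs : 2 ≤ s.re) : 1 / 3 ≤ ‖riemannZeta s‖ := by
  have htri : 1 - ‖riemannZeta s - 1‖ ≤ ‖riemannZeta s‖ := by
    simpa [norm_sub_rev] using norm_sub_norm_le 1 (1 - riemannZeta s)
  nlinarith [norm_riemannZeta_sub_one_le hs, Real.pi_lt_d2, Real.pi_pos]

lemma sub_one_div_three_le_norm_riemannZeta₁ {s : ℂ} (hs : 2 ≤ s.re) :
    (s.re - 1) / 3 ≤ ‖riemannZeta₁ s‖ := by
  have hs1 : s ≠ 1 := by rintro rfl; norm_num at hs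
  have hre : s.re - 1 ≤ ‖s - 1‖ := by simpa using re_le_norm (s - 1)
  calc (s.re - 1) / 3 = (s.re - 1) * (1 / 3) := by ring
    _ ≤ ‖s - 1‖ * ‖riemannZeta s‖ := by gcongr; exact one_third_le_norm_riemannZeta hs
    _ = ‖riemannZeta₁ s‖ := by rw [riemannZeta₁_eq_sub_mul hs1, norm_mul]

lemma exp_neg_two_le_norm_riemannZeta₁ {s : ℂ} (hs : 2 ≤ s.re) :
    rexp (-2) ≤ ‖riemannZeta₁ s‖ := by
  calc rexp (-2) ≤ 1 / 3 := by
        rw [Real.exp_neg, ← one_div]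
        gcongr
        linarith [Real.add_one_le_exp 2]
    _ ≤ (s.re - 1) / 3 := by linarith
    _ ≤ ‖riemannZeta₁ s‖ := sub_one_div_three_le_norm_riemannZeta₁ hs

end ZetaBounds

section ZeroFree

open Metric

/-- The half-plane `Re s > σ` contains no zero of `ζ`; the Riemann Hypothesis amounts to the case
`σ = 1 / 2`. -/
def ZetaZeroFree (σ : ℝ) : Prop := ∀ s : ℂ, σ < s.re → riemannZeta s ≠ 0

variable {σ : ℝ} {c s w : ℂ}

lemma zetaZeroFree_one_half
    (hRH : ∀ ρ : ℂ, riemannZeta ρ = 0 → 0 < ρ.re → ρ.re < 1 → ρ.re = 1 / 2) :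
    ZetaZeroFree (1 / 2) := fun s hs hζ ↦ by
  have hs1 : s.re < 1 := not_le.1 fun h ↦ riemannZeta_ne_zero_of_one_le_re h hζ
  exact hs.ne' (hRH s hζ (one_half_pos.trans hs) hs1)

lemma ZetaZeroFree.riemannZeta₁_ne_zero (hζ : ZetaZeroFree σ) (hs : σ < s.re) :
    riemannZeta₁ s ≠ 0 := by
  rcases eq_or_ne s 1 with rfl | hs1
  · simp
  · rw [riemannZeta₁_eq_sub_mul hs1]
    exact mul_ne_zero (sub_ne_zero.2 hs1) (hζ s hs)

lemma lt_re_of_mem_ball (hw : w ∈ ball c (c.re - σ)) : σ < w.re := by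
  have h := (abs_re_le_norm (w - c)).trans_lt (mem_ball_iff_norm.1 hw)
  rw [sub_re, abs_lt] at h
  linarith

lemma norm_riemannZeta₁_le_norm_center_mul_exp (hσ : 0 < σ) (hc : 2 ≤ c.re)
    (hw : w ∈ ball c (c.re - σ)) :
    ‖riemannZeta₁ w‖ ≤ ‖riemannZeta₁ c‖ * rexp (1 / σ + 4 * ‖c‖ + 2) := by
  have hσw : σ < w.re := lt_re_of_mem_ball hw
  have hinv : 1 / w.re ≤ 1 / σ := one_div_le_one_div_of_le hσ hσw.le
  have hnorm : ‖w‖ ≤ 2 * ‖c‖ := by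
    linarith [norm_le_norm_add_norm_sub' w c, mem_ball_iff_norm.1 hw, re_le_norm c]
  calc ‖riemannZeta₁ w‖ ≤ rexp (1 / w.re + 2 * ‖w‖) := norm_riemannZeta₁_le_exp (hσ.trans hσw)
    _ ≤ rexp (-2 + (1 / σ + 4 * ‖c‖ + 2)) := Real.exp_le_exp.2 (by linarith)
    _ ≤ ‖riemannZeta₁ c‖ * rexp (1 / σ + 4 * ‖c‖ + 2) := by
      rw [Real.exp_add]
      gcongr
      exact exp_neg_two_le_norm_riemannZeta₁ hc

lemma ZetaZeroFree.exp_neg_le_norm_riemannZeta₁ (hζ : ZetaZeroFree σ) (hσ : 0 < σ)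
    (hs : σ < s.re) :
    rexp (-(2 + 4 * (1 / σ + 4 * ‖s‖ + 10) / (s.re - σ))) ≤ ‖riemannZeta₁ s‖ := by
  have hsσ : 0 < s.re - σ := sub_pos.2 hs
  have hre : (s + 2).re = s.re + 2 := by simp
  have hdist : ‖s - (s + 2)‖ = 2 := by simp
  have hnorm : ‖s + 2‖ ≤ ‖s‖ + 2 := by simpa using norm_add_le s 2
  have hlower := norm_mul_exp_neg_le_norm_of_ne_zero_on_ball (c := s + 2) (z := s)
    (R := (s + 2).re - σ) (M := 1 / σ + 4 * ‖s + 2‖ + 2) (by positivity)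
    differentiable_riemannZeta₁.differentiableOn
    (fun w hw ↦ hζ.riemannZeta₁_ne_zero (lt_re_of_mem_ball hw))
    (fun w hw ↦ norm_riemannZeta₁_le_norm_center_mul_exp hσ (by linarith) hw)
    (by rw [mem_ball_iff_norm, hdist, hre]; linarith)
  refine le_trans ?_ hlower
  rw [hdist, hre, neg_add, Real.exp_add]
  gcongr ?_ * rexp (-(?_ / ?_))
  · exact exp_neg_two_le_norm_riemannZeta₁ (by linarith)
  · linarith
  · linarith

end ZeroFree

section Xi

open Topology ComplexConjugate

/-- Riemann's `ξ(s) = ½ s (s - 1) π ^ (-s / 2) Γ(s / 2) ζ(s)`. Writing it through the entire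
function `completedRiemannZeta₀` gives the right values at the removable singularities `0` and
`1`. -/
noncomputable def riemannXi (s : ℂ) : ℂ := (s * (s - 1) * completedRiemannZeta₀ s + 1) / 2

variable {s : ℂ}

lemma differentiable_riemannXi : Differentiable ℂ riemannXi := by
  have := differentiable_completedZeta₀
  unfold riemannXi
  fun_prop

lemma riemannXi_one_sub (s : ℂ) : riemannXi (1 - s) = riemannXi s := by
  rw [riemannXi, riemannXi, completedRiemannZeta₀_one_sub]
  ring

lemma riemannXi_one : riemannXi 1 = (1 / 2 : ℝ) := by simp [riemannXi]

lemma pi_cpow_ne_zero (z : ℂ) : (π : ℂ) ^ z ≠ 0 := by simp [cpow_eq_zero_iff]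

lemma differentiableAt_Gamma_of_re_pos (hs : 0 < s.re) : DifferentiableAt ℂ Complex.Gamma s :=
  differentiableAt_Gamma s fun m hm ↦ by
    have : (0 : ℝ) ≤ m := m.cast_nonneg
    rw [hm, neg_re, natCast_re] at hs
    linarith

lemma re_half_add_one_pos (hs : 0 < s.re) : 0 < (s / 2 + 1).re := by
  simp only [add_re, div_ofNat_re, one_re]
  positivity

lemma Gamma_half_add_one_ne_zero (hs : 0 < s.re) : Complex.Gamma (s / 2 + 1) ≠ 0 :=
  Complex.Gamma_ne_zero_of_re_pos (re_half_add_one_pos hs)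

lemma riemannXi_eq_mul_riemannZeta₁ (hs : 0 < s.re) :
    riemannXi s = (π : ℂ) ^ (-s / 2) * Complex.Gamma (s / 2 + 1) * riemannZeta₁ s := by
  rcases eq_or_ne s 1 with rfl | hs1
  · have hπ : (π : ℂ) ^ (-1 / 2 : ℂ) * (π : ℂ) ^ (1 / 2 : ℂ) = 1 := by
      rw [← cpow_add _ _ (ofReal_ne_zero.2 Real.pi_ne_zero)]
      norm_num
    rw [riemannXi_one, Complex.Gamma_add_one _ (by norm_num), Complex.Gamma_one_half_eq,
      riemannZeta₁_one, mul_left_comm, hπ]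
    norm_num
  · have hs1' : 1 - s ≠ 0 := sub_ne_zero.2 hs1.symm
    have hπ := pi_cpow_ne_zero (-s / 2)
    have hΓ := Gamma_half_add_one_ne_zero hs
    rw [riemannXi, riemannZeta₁_eq_sub_mul hs1, riemannZeta_eq_mul_completedRiemannZeta₀]
    generalize Complex.Gamma (s / 2 + 1) = Γ at hΓ ⊢
    field_simp
    ring

lemma riemannXi_two : riemannXi 2 = (π / 6 : ℝ) := by
  have hπ : (π : ℂ) ≠ 0 := ofReal_ne_zero.2 Real.pi_ne_zero
  have hΓ : Complex.Gamma 2 = 1 := by simp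
  rw [riemannXi_eq_mul_riemannZeta₁ (by simp), riemannZeta₁_eq_sub_mul (by norm_num),
    riemannZeta_two, neg_div, div_self two_ne_zero, one_add_one_eq_two, hΓ,
    cpow_neg_one]
  push_cast
  field_simp
  norm_num

lemma riemannXi_conj_of_re_pos (hs : 0 < s.re) : riemannXi (conj s) = conj (riemannXi s) := by
  have hΓ : Complex.Gamma (conj s / 2 + 1) = conj (Complex.Gamma (s / 2 + 1)) := by
    simp [← Complex.Gamma_conj, map_ofNat]
  have hπ : (π : ℂ) ^ (-conj s / 2) = conj ((π : ℂ) ^ (-s / 2)) := by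
    simpa [map_ofNat] using cpow_conj (π : ℂ) (-s / 2)
      (by simpa [arg_ofReal_of_nonneg Real.pi_pos.le] using Real.pi_ne_zero.symm)
  have hζ : riemannZeta₁ (conj s) = conj (riemannZeta₁ s) := by
    rcases eq_or_ne s 1 with rfl | hs1
    · simp
    · rw [riemannZeta₁_eq_sub_mul hs1, riemannZeta₁_eq_sub_mul
        ((map_ne_one_iff _ (RingHom.injective _)).2 hs1), riemannZeta_conj]
      simp
  rw [riemannXi_eq_mul_riemannZeta₁ hs, riemannXi_eq_mul_riemannZeta₁ (by simpa using hs), hΓ, hπ,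
    hζ, map_mul, map_mul]

lemma riemannXi_conj (s : ℂ) : riemannXi (conj s) = conj (riemannXi s) := by
  rcases lt_or_ge 0 s.re with hs | hs
  · exact riemannXi_conj_of_re_pos hs
  · rw [← riemannXi_one_sub, ← riemannXi_one_sub s,
      ← riemannXi_conj_of_re_pos (by rw [sub_re, one_re]; linarith), map_sub, map_one]

lemma norm_riemannXi_one_sub_conj (s : ℂ) : ‖riemannXi (1 - conj s)‖ = ‖riemannXi s‖ := by
  rw [riemannXi_one_sub, riemannXi_conj, norm_conj]

lemma ZetaZeroFree.riemannXi_ne_zero {σ : ℝ} (hζ : ZetaZeroFree σ) (hσ : σ < s.re)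
    (hs : 0 < s.re) : riemannXi s ≠ 0 := by
  rw [riemannXi_eq_mul_riemannZeta₁ hs]
  exact mul_ne_zero (mul_ne_zero (pi_cpow_ne_zero _) (Gamma_half_add_one_ne_zero hs))
    (hζ.riemannZeta₁_ne_zero hσ)

lemma norm_riemannXi_sub_div_le {h : ℝ} (hh : 0 < h) (hs : h < s.re) :
    ‖riemannXi (s - h) / riemannXi s‖ ≤
      π ^ (h / 2) / Real.Gamma (h / 2 + 1) * (‖riemannZeta₁ (s - h)‖ / ‖riemannZeta₁ s‖) := by
  have hπ : ‖(π : ℂ) ^ (-(s - h) / 2) / (π : ℂ) ^ (-s / 2)‖ = π ^ (h / 2) := by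
    rw [← cpow_sub _ _ (ofReal_ne_zero.2 Real.pi_ne_zero), norm_cpow_eq_rpow_re_of_pos Real.pi_pos]
    congr 1
    rw [sub_re, div_ofNat_re, div_ofNat_re, neg_re, neg_re, sub_re, ofReal_re]
    ring
  have hΓ := norm_Gamma_div_Gamma_add_le (z := (s - h) / 2 + 1) (h := h / 2)
    (by simp only [add_re, div_ofNat_re, sub_re, ofReal_re, one_re]; linarith) (half_pos hh)
  rw [show (s - h) / 2 + 1 + ((h / 2 : ℝ) : ℂ) = s / 2 + 1 by push_cast; ring] at hΓ
  rw [riemannXi_eq_mul_riemannZeta₁ (s := s - h) (by simpa using hs),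
    riemannXi_eq_mul_riemannZeta₁ (hh.trans hs), mul_div_mul_comm, mul_div_mul_comm, norm_mul,
    norm_mul, hπ, norm_div (riemannZeta₁ _), div_eq_mul_one_div (π ^ (h / 2))]
  gcongr

lemma logDeriv_pi_cpow_neg_half (s : ℂ) :
    logDeriv (fun z ↦ (π : ℂ) ^ (-z / 2)) s = -(1 / 2) * (Real.log π : ℂ) := by
  have hderiv : HasDerivAt (fun z ↦ (π : ℂ) ^ (-z / 2)) _ s :=
    ((hasDerivAt_neg s).div_const 2).const_cpow (Or.inl (ofReal_ne_zero.2 Real.pi_ne_zero))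
  rw [logDeriv_apply, hderiv.deriv, ofReal_log Real.pi_pos.le, mul_assoc,
    mul_div_cancel_left₀ _ (pi_cpow_ne_zero _)]
  ring

lemma logDeriv_Gamma_half_add_one (hs : 0 < s.re) :
    logDeriv (fun z ↦ Complex.Gamma (z / 2 + 1)) s =
      1 / 2 * logDeriv Complex.Gamma (s / 2 + 1) := by
  have hΓ : DifferentiableAt ℂ Complex.Gamma (s / 2 + 1) :=
    differentiableAt_Gamma_of_re_pos (re_half_add_one_pos hs)
  have hderiv : HasDerivAt (fun z : ℂ ↦ z / 2 + 1) (1 / 2) s :=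
    ((hasDerivAt_id s).div_const 2).add_const 1
  have hcomp := logDeriv_comp (f := Complex.Gamma) (g := fun z : ℂ ↦ z / 2 + 1) hΓ
    hderiv.differentiableAt
  rwa [hderiv.deriv, mul_comm] at hcomp

lemma logDeriv_riemannZeta₁ (hs1 : s ≠ 1) (hs : riemannZeta s ≠ 0) :
    logDeriv riemannZeta₁ s = 1 / (s - 1) + logDeriv riemannZeta s := by
  have heq : riemannZeta₁ =ᶠ[𝓝 s] fun z ↦ (z - 1) * riemannZeta z :=
    Filter.mem_of_superset (isOpen_ne.mem_nhds hs1) fun _ ↦ riemannZeta₁_eq_sub_mul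
  rw [(logDeriv_congr_nhds heq).eq_of_nhds,
    logDeriv_mul (f := fun z ↦ z - 1) s (sub_ne_zero.2 hs1) hs (by fun_prop)
      (differentiableAt_riemannZeta hs1),
    logDeriv_apply (fun z ↦ z - 1)]
  simp

lemma logDeriv_riemannXi (hs : 0 < s.re) (hs1 : s ≠ 1) (hζ : riemannZeta s ≠ 0) :
    logDeriv riemannXi s = -(1 / 2) * (Real.log π : ℂ) +
      1 / 2 * logDeriv Complex.Gamma (s / 2 + 1) + (1 / (s - 1) + logDeriv riemannZeta s) := by
  have heq : riemannXi =ᶠ[𝓝 s] fun z ↦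
      (π : ℂ) ^ (-z / 2) * Complex.Gamma (z / 2 + 1) * riemannZeta₁ z :=
    Filter.mem_of_superset ((isOpen_lt continuous_const continuous_re).mem_nhds hs)
      fun _ ↦ riemannXi_eq_mul_riemannZeta₁
  have hπ : DifferentiableAt ℂ (fun z ↦ (π : ℂ) ^ (-z / 2)) s :=
    DifferentiableAt.const_cpow (by fun_prop) (Or.inl (ofReal_ne_zero.2 Real.pi_ne_zero))
  have hΓ : DifferentiableAt ℂ (fun z ↦ Complex.Gamma (z / 2 + 1)) s :=
    DifferentiableAt.comp (g := Complex.Gamma) s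
      (differentiableAt_Gamma_of_re_pos (re_half_add_one_pos hs)) (by fun_prop)
  have hπ0 := pi_cpow_ne_zero (-s / 2)
  have hΓ0 := Gamma_half_add_one_ne_zero hs
  have hζ0 : riemannZeta₁ s ≠ 0 := by
    rw [riemannZeta₁_eq_sub_mul hs1]
    exact mul_ne_zero (sub_ne_zero.2 hs1) hζ
  rw [(logDeriv_congr_nhds heq).eq_of_nhds,
    logDeriv_mul (f := fun z ↦ (π : ℂ) ^ (-z / 2) * Complex.Gamma (z / 2 + 1)) s
      (mul_ne_zero hπ0 hΓ0) hζ0 (hπ.mul hΓ) (differentiable_riemannZeta₁ s),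
    logDeriv_mul (g := fun z ↦ Complex.Gamma (z / 2 + 1)) s hπ0 hΓ0 hπ hΓ,
    logDeriv_pi_cpow_neg_half, logDeriv_Gamma_half_add_one hs, logDeriv_riemannZeta₁ hs1 hζ]

end Xi

section Monotonicity

open Filter Topology ComplexConjugate

variable {σ h : ℝ} {s : ℂ}

lemma ZetaZeroFree.exists_norm_riemannXi_sub_div_le_exp (hζ : ZetaZeroFree σ) (hσ : 0 < σ)
    (hh : 0 < h) (hh1 : h < 1) (hσh : σ < (1 + h) / 2) :
    ∃ A B : ℝ, ∀ s : ℂ, (1 + h) / 2 ≤ s.re →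
      ‖riemannXi (s - h) / riemannXi s‖ ≤ A * rexp (B * ‖s‖) := by
  set C := π ^ (h / 2) / Real.Gamma (h / 2 + 1)
  have hC : 0 ≤ C := div_nonneg (by positivity) (Real.Gamma_pos_of_pos (by positivity)).le
  set δ := (1 + h) / 2 - σ
  have hδ : 0 < δ := sub_pos.2 hσh
  refine ⟨C * rexp (2 / (1 - h) + 2 * h + (2 + 4 * (1 / σ + 10) / δ)), 2 + 16 / δ,
    fun s hs ↦ ?_⟩
  have hre : (1 - h) / 2 ≤ (s - h).re := by rw [sub_re, ofReal_re]; linarith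
  have hupper : ‖riemannZeta₁ (s - h)‖ ≤ rexp (2 / (1 - h) + 2 * (‖s‖ + h)) := by
    refine (norm_riemannZeta₁_le_exp (by linarith)).trans (Real.exp_le_exp.2 ?_)
    have hinv : 1 / (s - h).re ≤ 2 / (1 - h) := by
      simpa using one_div_le_one_div_of_le (by linarith) hre
    have hnorm : ‖s - h‖ ≤ ‖s‖ + h := by
      simpa [abs_of_pos hh] using norm_sub_le s h
    linarith
  have hlower : rexp (-(2 + 4 * (1 / σ + 4 * ‖s‖ + 10) / δ)) ≤ ‖riemannZeta₁ s‖ := by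
    refine le_trans (Real.exp_le_exp.2 ?_) (hζ.exp_neg_le_norm_riemannZeta₁ hσ (by linarith))
    gcongr
    exact sub_le_sub_right hs σ
  calc ‖riemannXi (s - h) / riemannXi s‖
      ≤ C * (‖riemannZeta₁ (s - h)‖ / ‖riemannZeta₁ s‖) :=
        norm_riemannXi_sub_div_le hh (by linarith)
    _ ≤ C * (rexp (2 / (1 - h) + 2 * (‖s‖ + h)) /
          rexp (-(2 + 4 * (1 / σ + 4 * ‖s‖ + 10) / δ))) := by gcongr
    _ = C * rexp (2 / (1 - h) + 2 * h + (2 + 4 * (1 / σ + 10) / δ)) *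
          rexp ((2 + 16 / δ) * ‖s‖) := by
      rw [← Real.exp_sub, mul_assoc, ← Real.exp_add]
      ring_nf

lemma norm_riemannXi_ofReal_sub_div_le {x : ℝ} (hh : 0 < h) (hh1 : h < 1) (hx : 3 ≤ x) :
    ‖riemannXi (x - h) / riemannXi x‖ ≤ π ^ (h / 2) / Real.Gamma (h / 2 + 1) * 5 := by
  have hΓ : 0 < Real.Gamma (h / 2 + 1) := Real.Gamma_pos_of_pos (by positivity)
  have hupper : ‖riemannZeta₁ (x - h)‖ ≤ (x - 1) * (5 / 3) := by
    have hre : 2 ≤ (x - h : ℂ).re := by rw [sub_re, ofReal_re, ofReal_re]; linarith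
    have hne : (x - h : ℂ) ≠ 1 := fun h1 ↦ by norm_num [h1] at hre
    have hnorm : ‖(x - h - 1 : ℂ)‖ ≤ x - 1 := by
      rw [← ofReal_sub, ← ofReal_one, ← ofReal_sub, Complex.norm_of_nonneg (by linarith)]
      linarith
    rw [riemannZeta₁_eq_sub_mul hne, norm_mul]
    exact mul_le_mul hnorm (norm_riemannZeta_le hre) (norm_nonneg _) (by linarith)
  have hlower : (x - 1) / 3 ≤ ‖riemannZeta₁ x‖ :=
    sub_one_div_three_le_norm_riemannZeta₁ (s := x) (by rw [ofReal_re]; linarith)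
  refine (norm_riemannXi_sub_div_le hh (by rw [ofReal_re]; linarith)).trans ?_
  gcongr
  rw [div_le_iff₀ (by linarith)]
  linarith

lemma norm_riemannXi_sub_eq_of_re_eq (hs : s.re = (1 + h) / 2) :
    ‖riemannXi (s - h)‖ = ‖riemannXi s‖ := by
  have hreflect : s - h = 1 - conj s := by
    apply Complex.ext <;> simp [hs]
    ring
  rw [hreflect, norm_riemannXi_one_sub_conj]

lemma ZetaZeroFree.norm_riemannXi_sub_le (hζ : ZetaZeroFree σ) (hσ : 0 < σ) (hh : 0 < h)
    (hh1 : h < 1) (hσh : σ < (1 + h) / 2) (hs : (1 + h) / 2 ≤ s.re) :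
    ‖riemannXi (s - h)‖ ≤ ‖riemannXi s‖ := by
  have hne (z : ℂ) (hz : (1 + h) / 2 ≤ z.re) : riemannXi z ≠ 0 :=
    hζ.riemannXi_ne_zero (by linarith) (by linarith)
  obtain ⟨A, B, hAB⟩ := hζ.exists_norm_riemannXi_sub_div_le_exp hσ hh hh1 hσh
  have hdiff : DifferentiableOn ℂ (fun z ↦ riemannXi (z - h) / riemannXi z)
      {z | (1 + h) / 2 ≤ z.re} :=
    (differentiable_riemannXi.comp (differentiable_id.sub_const _)).differentiableOn.div
      differentiable_riemannXi.differentiableOn hne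
  have hreal : ∀ᶠ x : ℝ in atTop, ‖riemannXi (x - h) / riemannXi x‖ ≤
      π ^ (h / 2) / Real.Gamma (h / 2 + 1) * 5 :=
    (eventually_ge_atTop 3).mono fun x ↦ norm_riemannXi_ofReal_sub_div_le hh hh1
  have hline (z : ℂ) (hz : z.re = (1 + h) / 2) : ‖riemannXi (z - h) / riemannXi z‖ ≤ 1 := by
    rw [norm_div, norm_riemannXi_sub_eq_of_re_eq hz]
    exact div_self_le_one _
  have hquot : ‖riemannXi (s - h) / riemannXi s‖ ≤ 1 :=
    norm_le_of_bounded_on_vertical_line (f := fun z ↦ riemannXi (z - h) / riemannXi z)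
      hdiff hAB hreal hline hs
  rwa [norm_div, div_le_one₀ (norm_pos_iff.2 (hne s hs))] at hquot

lemma ZetaZeroFree.re_logDeriv_riemannXi_nonneg (hζ : ZetaZeroFree (1 / 2)) (hs : 1 / 2 < s.re) :
    0 ≤ (logDeriv riemannXi s).re := by
  refine re_logDeriv_nonneg_of_eventually_norm_sub_le (differentiable_riemannXi s) ?_
  filter_upwards [Ioo_mem_nhdsGT (lt_min one_pos (show 0 < 2 * s.re - 1 by linarith))]
    with h ⟨hh, hlt⟩
  obtain ⟨hh1, hhs⟩ := lt_min_iff.1 hlt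
  exact hζ.norm_riemannXi_sub_le one_half_pos hh hh1 (by linarith) (by linarith)

lemma ZetaZeroFree.re_logDeriv_riemannXi_pos (hζ : ZetaZeroFree (1 / 2)) (hs : 1 / 2 < s.re) :
    0 < (logDeriv riemannXi s).re := by
  have hξ : ‖riemannXi 1‖ ≠ ‖riemannXi 2‖ := by
    rw [riemannXi_one, riemannXi_two, Complex.norm_of_nonneg (by positivity),
      Complex.norm_of_nonneg (by positivity)]
    linarith [Real.pi_gt_three]
  exact re_logDeriv_pos_of_nonneg (U := {z | 1 / 2 < z.re})
    (isOpen_lt continuous_const continuous_re) (convex_halfSpace_re_gt _).isPreconnected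
    differentiable_riemannXi.differentiableOn
    (fun z hz ↦ hζ.riemannXi_ne_zero hz (one_half_pos.trans hz))
    (fun z hz ↦ hζ.re_logDeriv_riemannXi_nonneg hz) (z := 1) (w := 2)
    (by norm_num) (by norm_num) (by simp) hξ s hs

end Monotonicity

/-- Assuming the Riemann Hypothesis, for every `s` with `Re s > 1/2` and `s ≠ 1`,
`-Re(ζ'(s)/ζ(s)) < Re(1/(s-1)) - (1/2)·log π + (1/2)·Re(Γ'(s/2+1)/Γ(s/2+1))`. -/
theorem rh_implies_strict_bound
    (hRH : ∀ ρ : ℂ, riemannZeta ρ = 0 → 0 < ρ.re → ρ.re < 1 → ρ.re = 1 / 2) :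
    ∀ s : ℂ, 1 / 2 < s.re → s ≠ 1 →
      -(deriv riemannZeta s / riemannZeta s).re <
        (1 / (s - 1)).re - (1 / 2) * Real.log Real.pi +
          (1 / 2) * (deriv Complex.Gamma (s / 2 + 1) / Complex.Gamma (s / 2 + 1)).re := by
  intro s hs hs1
  have hζ : ZetaZeroFree (1 / 2) := zetaZeroFree_one_half hRH
  have hξ : 0 < (logDeriv riemannXi s).re := hζ.re_logDeriv_riemannXi_pos hs
  have hhalf (z : ℂ) : ((1 / 2 : ℂ) * z).re = 1 / 2 * z.re := by simp
  rw [logDeriv_riemannXi (one_half_pos.trans hs) hs1 (hζ s hs), neg_mul] at hξ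
  simp only [logDeriv_apply, add_re, neg_re, hhalf, ofReal_re] at hξ
  linarith
end

section
/- Assume the Riemann Hypothesis. Then for every real number t with ζ(1/2 + it) ≠ 0, one has the exact identity −Re(ζ'(1/2+it)/ζ(1/2+it)) = Re(1/(it − 1/2)) − (1/2)·log π + (1/2)·Re(Γ'(5/4 + it/2)/Γ(5/4 + it/2)), where Γ is the complex Gamma function and Γ' its derivative. -/
open Complex Real

/-!
On the critical line the reflection `s ↦ 1 - s` agrees with complex conjugation. The completed zeta
function `Λ` is invariant under the first and commutes with the second, so `Λ'/Λ` is purely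
imaginary there. Since `ζ = Λ / Γ_ℝ`, this leaves `-Re (ζ'/ζ) = Re (Γ_ℝ'/Γ_ℝ)`, and the recurrence
of the digamma function moves its argument from `s / 2` to `s / 2 + 1`, at the cost of `Re (1 / s)`,
which on the critical line is `-Re (1 / (s - 1))`.
-/

open scoped ComplexConjugate

lemma logDeriv_const_sub_of_symm {𝕜 𝕜' : Type*} [NontriviallyNormedField 𝕜]
    [NontriviallyNormedField 𝕜'] [NormedAlgebra 𝕜 𝕜'] {f : 𝕜 → 𝕜'} {a : 𝕜}
    (hf : ∀ z, f (a - z) = f z) (s : 𝕜) : logDeriv f (a - s) = -logDeriv f s := by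
  have hderiv : deriv f s = -deriv f (a - s) := by
    rw [← deriv_comp_const_sub, funext hf]
  rw [logDeriv_apply, logDeriv_apply, hf, hderiv, neg_div, neg_neg]

lemma logDeriv_conj_of_map_conj {𝕜 : Type*} [NontriviallyNormedField 𝕜] [StarRing 𝕜]
    [NormedStarGroup 𝕜] {f : 𝕜 → 𝕜} (hf : ∀ z, f (conj z) = conj (f z)) (s : 𝕜) :
    logDeriv f (conj s) = conj (logDeriv f s) := by
  have hconj : conj ∘ f ∘ conj = f := by
    funext z
    rw [Function.comp_apply, Function.comp_apply, hf, starRingEnd_self_apply]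
  have hderiv : deriv f (conj s) = conj (deriv f s) := by
    conv_lhs => rw [← hconj]
    rw [deriv_conj_conj, Function.comp_apply, Function.comp_apply, starRingEnd_self_apply]
  rw [logDeriv_apply, logDeriv_apply, hf, hderiv, map_div₀]

lemma re_logDeriv_eq_zero_of_symm {𝕜 : Type*} [RCLike 𝕜] {f : 𝕜 → 𝕜} {a s : 𝕜}
    (hsub : ∀ z, f (a - z) = f z) (hconj : ∀ z, f (conj z) = conj (f z)) (hs : a - s = conj s) :
    RCLike.re (logDeriv f s) = 0 := by
  have h : conj (logDeriv f s) = -logDeriv f s := by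
    rw [← logDeriv_conj_of_map_conj hconj, ← hs, logDeriv_const_sub_of_symm hsub]
  have hre := congrArg RCLike.re h
  rw [RCLike.conj_re, map_neg] at hre
  exact self_eq_neg.mp hre

lemma one_sub_eq_conj_of_re_eq_half {s : ℂ} (hs : s.re = 1 / 2) : 1 - s = conj s := by
  apply Complex.ext
  · rw [sub_re, one_re, conj_re, hs]
    norm_num
  · rw [sub_im, one_im, conj_im, zero_sub]

lemma re_inv_sub_one_of_re_eq_half {s : ℂ} (hs : s.re = 1 / 2) :
    (s - 1)⁻¹.re = -s⁻¹.re := by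
  rw [← neg_sub, one_sub_eq_conj_of_re_eq_half hs, inv_neg, ← map_inv₀, neg_re, conj_re]

lemma Gammaℝ_conj (s : ℂ) : Gammaℝ (conj s) = conj (Gammaℝ s) := by
  have hhalf : conj s / 2 = conj (s / 2) := by rw [map_div₀, conj_ofNat]
  have hpi : (π : ℂ).arg ≠ π := by
    rw [arg_ofReal_of_nonneg pi_pos.le]
    exact pi_ne_zero.symm
  rw [Gammaℝ_def, Gammaℝ_def, map_mul, neg_div, neg_div, hhalf, ← map_neg, Complex.Gamma_conj,
    cpow_conj _ _ hpi, conj_ofReal]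

lemma differentiableAt_Gammaℝ {s : ℂ} (hs : Gammaℝ s ≠ 0) : DifferentiableAt ℂ Gammaℝ s := by
  simpa only [inv_inv] using (differentiable_Gammaℝ_inv s).fun_inv (inv_ne_zero hs)

lemma ne_zero_of_Gammaℝ_ne_zero {s : ℂ} (hs : Gammaℝ s ≠ 0) : s ≠ 0 := by
  rintro rfl
  exact hs (Gammaℝ_eq_zero_iff.mpr ⟨0, by simp⟩)

lemma div_two_ne_neg_natCast_of_Gammaℝ_ne_zero {s : ℂ} (hs : Gammaℝ s ≠ 0) (m : ℕ) :
    s / 2 ≠ -m := by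
  intro h
  exact hs (Gammaℝ_eq_zero_iff.mpr ⟨m, by linear_combination 2 * h⟩)

lemma logDeriv_Gammaℝ {s : ℂ} (hs : Gammaℝ s ≠ 0) :
    logDeriv Gammaℝ s = -Real.log π / 2 + digamma (s / 2) / 2 := by
  have hm := div_two_ne_neg_natCast_of_Gammaℝ_ne_zero hs
  have hpi : (π : ℂ) ≠ 0 := ofReal_ne_zero.mpr pi_ne_zero
  have hpow : HasDerivAt (fun z : ℂ ↦ (π : ℂ) ^ (-z / 2))
      ((π : ℂ) ^ (-s / 2) * Complex.log π * (-1 / 2)) s :=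
    ((hasDerivAt_id s).neg.div_const 2).const_cpow (Or.inl hpi)
  have hhalf : HasDerivAt (fun z : ℂ ↦ z / 2) (1 / 2) s := (hasDerivAt_id s).div_const 2
  have hGamma : DifferentiableAt ℂ Complex.Gamma (s / 2) := differentiableAt_Gamma _ hm
  have hcomp : logDeriv (Complex.Gamma ∘ fun z : ℂ ↦ z / 2) s =
      logDeriv Complex.Gamma (s / 2) * (1 / 2) := by
    rw [logDeriv_comp (g := fun z : ℂ ↦ z / 2) hGamma hhalf.differentiableAt, hhalf.deriv]
  have hpow_ne : (π : ℂ) ^ (-s / 2) ≠ 0 := left_ne_zero_of_mul hs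
  calc
    logDeriv Gammaℝ s
        = logDeriv (fun z : ℂ ↦ (π : ℂ) ^ (-z / 2)) s
          + logDeriv (Complex.Gamma ∘ fun z : ℂ ↦ z / 2) s :=
      logDeriv_mul s hpow_ne (right_ne_zero_of_mul hs) hpow.differentiableAt
        (hGamma.comp s hhalf.differentiableAt)
    _ = -Real.log π / 2 + digamma (s / 2) / 2 := by
      rw [logDeriv_apply, hpow.deriv, hcomp, ← digamma_def, ofReal_log pi_pos.le, mul_assoc,
        mul_div_cancel_left₀ _ hpow_ne]
      ring

lemma logDeriv_Gammaℝ_eq_digamma_add_one {s : ℂ} (hs : Gammaℝ s ≠ 0) :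
    logDeriv Gammaℝ s = -Real.log π / 2 + digamma (s / 2 + 1) / 2 - s⁻¹ := by
  rw [logDeriv_Gammaℝ hs,
    digamma_apply_add_one _ (div_two_ne_neg_natCast_of_Gammaℝ_ne_zero hs), inv_div]
  ring

lemma completedRiemannZeta_eq_Gammaℝ_mul {s : ℂ} (hs : Gammaℝ s ≠ 0) :
    completedRiemannZeta s = Gammaℝ s * riemannZeta s := by
  rw [riemannZeta_def_of_ne_zero (ne_zero_of_Gammaℝ_ne_zero hs), mul_div_cancel₀ _ hs]

lemma completedRiemannZeta_conj (s : ℂ) :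
    completedRiemannZeta (conj s) = conj (completedRiemannZeta s) := by
  have hpos (z : ℂ) (hz : 0 < z.re) :
      completedRiemannZeta (conj z) = conj (completedRiemannZeta z) := by
    rw [completedRiemannZeta_eq_Gammaℝ_mul (Gammaℝ_ne_zero_of_re_pos hz),
      completedRiemannZeta_eq_Gammaℝ_mul (Gammaℝ_ne_zero_of_re_pos (by rwa [conj_re])),
      Gammaℝ_conj, riemannZeta_conj, map_mul]
  rcases lt_or_ge 0 s.re with hs | hs
  · exact hpos s hs
  · have hreflect : 0 < (1 - s).re := by
      rw [sub_re, one_re]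
      linarith
    rw [← completedRiemannZeta_one_sub, ← completedRiemannZeta_one_sub s, ← hpos _ hreflect,
      map_sub, map_one]

lemma re_logDeriv_completedRiemannZeta_of_re_eq_half {s : ℂ} (hs : s.re = 1 / 2) :
    (logDeriv completedRiemannZeta s).re = 0 :=
  re_logDeriv_eq_zero_of_symm completedRiemannZeta_one_sub completedRiemannZeta_conj
    (one_sub_eq_conj_of_re_eq_half hs)

lemma logDeriv_riemannZeta {s : ℂ} (hs1 : s ≠ 1) (hGamma : Gammaℝ s ≠ 0)
    (hzeta : riemannZeta s ≠ 0) :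
    logDeriv riemannZeta s = logDeriv completedRiemannZeta s - logDeriv Gammaℝ s := by
  have hs0 := ne_zero_of_Gammaℝ_ne_zero hGamma
  have hquot : riemannZeta =ᶠ[nhds s] fun z ↦ completedRiemannZeta z / Gammaℝ z := by
    filter_upwards [isOpen_ne.mem_nhds hs0] with z hz using riemannZeta_def_of_ne_zero hz
  have hcompleted : completedRiemannZeta s ≠ 0 := by
    rw [completedRiemannZeta_eq_Gammaℝ_mul hGamma]
    exact mul_ne_zero hGamma hzeta
  rw [(logDeriv_congr_nhds hquot).eq_of_nhds, logDeriv_div s hcompleted hGamma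
    (differentiableAt_completedZeta hs0 hs1) (differentiableAt_Gammaℝ hGamma)]

lemma neg_re_logDeriv_riemannZeta_eq_re_logDeriv_Gammaℝ {s : ℂ} (hs : s.re = 1 / 2)
    (hzeta : riemannZeta s ≠ 0) : -(logDeriv riemannZeta s).re = (logDeriv Gammaℝ s).re := by
  have hs1 : s ≠ 1 := by
    rintro rfl
    norm_num at hs
  have hGamma : Gammaℝ s ≠ 0 := Gammaℝ_ne_zero_of_re_pos (by rw [hs]; exact one_half_pos)
  rw [logDeriv_riemannZeta hs1 hGamma hzeta, sub_re,
    re_logDeriv_completedRiemannZeta_of_re_eq_half hs, zero_sub, neg_neg]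

lemma neg_re_logDeriv_riemannZeta_of_re_eq_half {s : ℂ} (hs : s.re = 1 / 2)
    (hzeta : riemannZeta s ≠ 0) :
    -(logDeriv riemannZeta s).re =
      (s - 1)⁻¹.re - 1 / 2 * Real.log π + 1 / 2 * (digamma (s / 2 + 1)).re := by
  have hGamma : Gammaℝ s ≠ 0 := Gammaℝ_ne_zero_of_re_pos (by rw [hs]; exact one_half_pos)
  rw [neg_re_logDeriv_riemannZeta_eq_re_logDeriv_Gammaℝ hs hzeta,
    logDeriv_Gammaℝ_eq_digamma_add_one hGamma, re_inv_sub_one_of_re_eq_half hs, ← ofReal_neg,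
    sub_re, add_re, div_ofNat_re, div_ofNat_re, ofReal_re]
  ring

theorem rh_implies_critical_line_identity_general (t : ℝ)
    (ht : riemannZeta (1 / 2 + t * Complex.I) ≠ 0) :
    -(deriv riemannZeta (1 / 2 + t * Complex.I) /
        riemannZeta (1 / 2 + t * Complex.I)).re =
      (1 / (t * Complex.I - 1 / 2)).re - (1 / 2) * Real.log Real.pi +
        (1 / 2) * (deriv Complex.Gamma (5 / 4 + t * Complex.I / 2) /
          Complex.Gamma (5 / 4 + t * Complex.I / 2)).re := by
  have hre : (1 / 2 + t * Complex.I).re = 1 / 2 := by simp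
  have hpole : t * Complex.I - 1 / 2 = (1 / 2 + t * Complex.I) - 1 := by ring
  have hGamma : 5 / 4 + t * Complex.I / 2 = (1 / 2 + t * Complex.I) / 2 + 1 := by ring
  rw [hpole, hGamma, one_div (_ - _), ← logDeriv_apply, ← logDeriv_apply, ← digamma_def]
  exact neg_re_logDeriv_riemannZeta_of_re_eq_half hre ht

/-- Assuming the Riemann Hypothesis, for every real `t` with `ζ(1/2 + it) ≠ 0`,
`-Re(ζ'(1/2+it)/ζ(1/2+it)) = Re(1/(it - 1/2)) - (1/2)·log π
  + (1/2)·Re(Γ'(5/4 + it/2)/Γ(5/4 + it/2))`. -/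
theorem rh_implies_critical_line_identity
    (hRH : ∀ ρ : ℂ, riemannZeta ρ = 0 → 0 < ρ.re → ρ.re < 1 → ρ.re = 1 / 2) :
    ∀ t : ℝ, riemannZeta (1 / 2 + t * Complex.I) ≠ 0 →
      -(deriv riemannZeta (1 / 2 + t * Complex.I) /
          riemannZeta (1 / 2 + t * Complex.I)).re =
        (1 / (t * Complex.I - 1 / 2)).re - (1 / 2) * Real.log Real.pi +
          (1 / 2) * (deriv Complex.Gamma (5 / 4 + t * Complex.I / 2) /
            Complex.Gamma (5 / 4 + t * Complex.I / 2)).re :=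
  rh_implies_critical_line_identity_general
end
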